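/- arXiv:2402.02412 — 2 statements merged into one kernel-verified Lean document; each statement's English description precedes it below -/
import Mathlib

section
/- Let P = {p_1, …, p_n} be a finite set and ℱ a family of nonempty subsets of P. For each i ∈ {1, …, n} let s_i = [0,1] × [2i−2, 2i−1]. For each set S = {p_{i_1}, …, p_{i_f}} ∈ ℱ with i_1 < i_2 < ⋯ < i_f, let K_S be the k-shape consisting of the stack of rectangles s_{i_1}, [0, n+1] × [2i_1 − 1, 2i_2 − 2], s_{i_2}, [0, n+1] × [2i_2 − 1, 2i_3 − 2], …, [0, n+1] × [2i_{f−1} − 1, 2i_f − 2], s_{i_f}. Then for every γ ∈ ℕ: there exists a hitting set H ⊆ P with |H| ≤ γ (i.e., H ∩ S ≠ ∅ for every S ∈ ℱ) if and only if the family {K_S : S ∈ ℱ} admits a feasible stabbing set of cost at most γ. -/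
structure Rect where
  xl : ℝ
  xr : ℝ
  yb : ℝ
  yt : ℝ

namespace Rect
def width (R : Rect) : ℝ := R.xr - R.xl
def valid (R : Rect) : Prop := R.xl ≤ R.xr ∧ R.yb ≤ R.yt
def toSet (R : Rect) : Set (ℝ × ℝ) := Set.Icc R.xl R.xr ×ˢ Set.Icc R.yb R.yt
end Rect

structure Seg where
  x1 : ℝ
  x2 : ℝ
  y : ℝ

namespace Seg
def len (s : Seg) : ℝ := s.x2 - s.x1
def valid (s : Seg) : Prop := s.x1 ≤ s.x2
def stabsRect (s : Seg) (R : Rect) : Prop :=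
  s.x1 ≤ R.xl ∧ R.xr ≤ s.x2 ∧ R.yb ≤ s.y ∧ s.y ≤ R.yt
def stabsShape {k : ℕ} (s : Seg) (R : Fin k → Rect) : Prop :=
  ∃ i, s.stabsRect (R i)
end Seg

/-- `R 0, …, R (k-1)` (from bottom to top) form a `k`-shape: all rectangles are valid
(nonempty), and for consecutive rectangles the top edge of the lower one is contained in the
bottom edge of the upper one, or vice versa (they share their `y`-coordinate and one
`x`-interval contains the other). -/
def IsKShape {k : ℕ} (R : Fin k → Rect) : Prop :=
  (∀ i, (R i).valid) ∧
  ∀ (i : ℕ) (h : i + 1 < k),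
    (R ⟨i, Nat.lt_of_succ_lt h⟩).yt = (R ⟨i + 1, h⟩).yb ∧
    (Set.Icc (R ⟨i, Nat.lt_of_succ_lt h⟩).xl (R ⟨i, Nat.lt_of_succ_lt h⟩).xr ⊆
        Set.Icc (R ⟨i + 1, h⟩).xl (R ⟨i + 1, h⟩).xr ∨
      Set.Icc (R ⟨i + 1, h⟩).xl (R ⟨i + 1, h⟩).xr ⊆
        Set.Icc (R ⟨i, Nat.lt_of_succ_lt h⟩).xl (R ⟨i, Nat.lt_of_succ_lt h⟩).xr)

/-- Total cost (length) of a finite set of horizontal segments. -/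
noncomputable def segCost (S : Finset Seg) : ℝ := ∑ s ∈ S, s.len

/-- The unit square `s_i = [0,1] × [2i−2, 2i−1]` (for the 1-based index `i`). -/
noncomputable def sqRect (i : ℕ) : Rect := ⟨0, 1, 2 * (i : ℝ) - 2, 2 * (i : ℝ) - 1⟩

/-- The wide rectangle `[0, n+1] × [2i−1, 2j−2]` (for 1-based indices `i < j`). -/
noncomputable def wideRect (n i j : ℕ) : Rect := ⟨0, (n : ℝ) + 1, 2 * (i : ℝ) - 1, 2 * (j : ℝ) - 2⟩

/-- A horizontal segment stabs the k-shape `K_S` (the stack of the squares `s_i` for `i ∈ S`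
interleaved with the wide rectangles `[0,n+1] × [2i−1, 2j−2]` for consecutive elements
`i < j` of `S`) iff it stabs one of these rectangles. (Indices of `Fin n` are 0-based, so
the corresponding 1-based index of `i : Fin n` is `i + 1`.) -/
def stabsKS (n : ℕ) (S : Finset (Fin n)) (s : Seg) : Prop :=
  (∃ i ∈ S, s.stabsRect (sqRect ((i : ℕ) + 1))) ∨
  (∃ i ∈ S, ∃ j ∈ S, i < j ∧ (∀ m ∈ S, ¬(i < m ∧ m < j)) ∧
      s.stabsRect (wideRect n ((i : ℕ) + 1) ((j : ℕ) + 1)))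

/-!
A square `s_i` costs at least `1` to stab, and since the squares have disjoint vertical ranges no
segment stabs two of them, so the indices of the stabbed squares number at most the total cost.
They form a hitting set unless some wide rectangle is stabbed; but that alone costs `n + 1`, and
then all of `P` is affordable. Conversely, unit segments through the squares of a hitting set stab
every `K_S`.
-/

namespace Seg

theorem stabsRect.width_le_len {s : Seg} {R : Rect} (h : s.stabsRect R) : R.width ≤ s.len :=
  sub_le_sub h.2.1 h.1

theorem len_nonneg {s : Seg} (hs : s.valid) : 0 ≤ s.len :=
  sub_nonneg.2 hs

end Seg

namespace Rect

/-- The bottom edge of a rectangle as a horizontal segment, the canonical segment stabbing it. -/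
def bottomEdge (R : Rect) : Seg := ⟨R.xl, R.xr, R.yb⟩

theorem valid.bottomEdge_stabsRect {R : Rect} (hR : R.valid) : R.bottomEdge.stabsRect R :=
  ⟨le_rfl, le_rfl, le_rfl, hR.2⟩

end Rect

theorem sqRect_valid (i : ℕ) : (sqRect i).valid :=
  ⟨zero_le_one, by simp only [sqRect]; linarith⟩

theorem width_sqRect (i : ℕ) : (sqRect i).width = 1 :=
  sub_zero 1

theorem width_wideRect (n i j : ℕ) : (wideRect n i j).width = n + 1 :=
  sub_zero _

namespace Seg

theorem stabsRect.sqRect_index_le {s : Seg} {i j : ℕ} (hi : s.stabsRect (sqRect i))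
    (hj : s.stabsRect (sqRect j)) : i ≤ j := by
  have bottom_le_top : 2 * (i : ℝ) - 2 ≤ 2 * (j : ℝ) - 1 := hi.2.2.1.trans hj.2.2.2
  have : (i : ℝ) < (j + 1 : ℕ) := by push_cast; linarith
  exact Nat.lt_succ_iff.1 (Nat.cast_lt.1 this)

theorem stabsRect.sqRect_index_unique {s : Seg} {i j : ℕ} (hi : s.stabsRect (sqRect i))
    (hj : s.stabsRect (sqRect j)) : i = j :=
  (hi.sqRect_index_le hj).antisymm (hj.sqRect_index_le hi)

end Seg

theorem len_le_segCost {Sg : Finset Seg} (hvalid : ∀ s ∈ Sg, s.valid) {s : Seg} (hs : s ∈ Sg) :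
    s.len ≤ segCost Sg :=
  Finset.single_le_sum (fun t ht => Seg.len_nonneg (hvalid t ht)) hs

theorem card_filter_le_len_nsmul_le_segCost {Sg : Finset Seg} (hvalid : ∀ s ∈ Sg, s.valid)
    (c : ℝ) : (Sg.filter (c ≤ ·.len)).card • c ≤ segCost Sg :=
  calc (Sg.filter (c ≤ ·.len)).card • c
      ≤ ∑ s ∈ Sg.filter (c ≤ ·.len), s.len :=
        Finset.card_nsmul_le_sum _ _ _ fun _ hs => (Finset.mem_filter.1 hs).2
    _ ≤ segCost Sg :=
        Finset.sum_le_sum_of_subset_of_nonneg (Finset.filter_subset _ _)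
          fun s hs _ => Seg.len_nonneg (hvalid s hs)

open Classical in
/-- The points of `P` whose squares are stabbed by some segment of `Sg`, i.e. the candidate hitting
set read off a stabbing set. The point `i : Fin n` owns the square with 1-based index `i + 1`. -/
noncomputable def stabbedPoints (n : ℕ) (Sg : Finset Seg) : Finset (Fin n) :=
  {i | ∃ s ∈ Sg, s.stabsRect (sqRect (i + 1))}

theorem mem_stabbedPoints {n : ℕ} {Sg : Finset Seg} {i : Fin n} :
    i ∈ stabbedPoints n Sg ↔ ∃ s ∈ Sg, s.stabsRect (sqRect (i + 1)) := by
  simp only [stabbedPoints, Finset.mem_filter, Finset.mem_univ, true_and]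

theorem card_stabbedPoints_le_segCost (n : ℕ) {Sg : Finset Seg} (hvalid : ∀ s ∈ Sg, s.valid) :
    ((stabbedPoints n Sg).card : ℝ) ≤ segCost Sg := by
  have card_le : (stabbedPoints n Sg).card ≤ (Sg.filter (1 ≤ ·.len)).card := by
    refine Finset.card_le_card_of_forall_subsingleton
      (fun i s => s.stabsRect (sqRect (i + 1))) (fun i hi => ?_) ?_
    · obtain ⟨s, hs, hstab⟩ := mem_stabbedPoints.1 hi
      have one_le_len : 1 ≤ s.len := width_sqRect (i + 1) ▸ hstab.width_le_len
      exact ⟨s, Finset.mem_filter.2 ⟨hs, one_le_len⟩, hstab⟩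
    · rintro s - i ⟨-, hi⟩ j ⟨-, hj⟩
      exact Fin.ext (Nat.succ_injective (hi.sqRect_index_unique hj))
  calc ((stabbedPoints n Sg).card : ℝ)
      ≤ (Sg.filter (1 ≤ ·.len)).card := Nat.cast_le.2 card_le
    _ = (Sg.filter (1 ≤ ·.len)).card • (1 : ℝ) := (nsmul_one _).symm
    _ ≤ segCost Sg := card_filter_le_len_nsmul_le_segCost hvalid 1

namespace stabsKS

variable {n : ℕ} {S : Finset (Fin n)} {s : Seg}

theorem nonempty (h : stabsKS n S s) : S.Nonempty := by
  rcases h with ⟨i, hi, -⟩ | ⟨i, hi, -⟩ <;> exact ⟨i, hi⟩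

theorem exists_stabsRect_sqRect_or_le_len (h : stabsKS n S s) :
    (∃ i ∈ S, s.stabsRect (sqRect (i + 1))) ∨ (n : ℝ) + 1 ≤ s.len :=
  h.imp_right fun ⟨i, _, j, _, _, _, hstab⟩ =>
    width_wideRect n (i + 1) (j + 1) ▸ hstab.width_le_len

end stabsKS

theorem exists_stabbingSet_segCost_le_card {n : ℕ} (H : Finset (Fin n)) :
    ∃ Sg : Finset Seg, (∀ s ∈ Sg, s.valid) ∧
      (∀ S : Finset (Fin n), (∃ p ∈ S, p ∈ H) → ∃ s ∈ Sg, stabsKS n S s) ∧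
      segCost Sg ≤ H.card := by
  classical
  let edge (p : Fin n) : Seg := (sqRect (p + 1)).bottomEdge
  refine ⟨H.image edge, ?_, ?_, ?_⟩
  · exact Finset.forall_mem_image.2 fun p _ => (sqRect_valid (p + 1)).1
  · rintro S ⟨p, hpS, hpH⟩
    exact ⟨edge p, Finset.mem_image_of_mem edge hpH,
      .inl ⟨p, hpS, (sqRect_valid (p + 1)).bottomEdge_stabsRect⟩⟩
  · have len_le : ∀ s ∈ H.image edge, s.len ≤ 1 :=
      Finset.forall_mem_image.2 fun p _ => (width_sqRect (p + 1)).le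
    calc segCost (H.image edge) ≤ (H.image edge).card • (1 : ℝ) :=
          Finset.sum_le_card_nsmul _ _ _ len_le
      _ = (H.image edge).card := nsmul_one _
      _ ≤ H.card := Nat.cast_le.2 Finset.card_image_le

theorem exists_hittingSet_card_le_segCost (n : ℕ) {Sg : Finset Seg}
    (hvalid : ∀ s ∈ Sg, s.valid) :
    ∃ H : Finset (Fin n), (H.card : ℝ) ≤ segCost Sg ∧
      ∀ S : Finset (Fin n), (∃ s ∈ Sg, stabsKS n S s) → ∃ p ∈ S, p ∈ H := by
  by_cases hlong : ∃ s ∈ Sg, (n : ℝ) + 1 ≤ s.len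
  · obtain ⟨s, hs, hlen⟩ := hlong
    refine ⟨Finset.univ, ?_, ?_⟩
    · have := len_le_segCost hvalid hs
      rw [Finset.card_fin]
      linarith
    · rintro S ⟨t, -, ht⟩
      obtain ⟨p, hp⟩ := ht.nonempty
      exact ⟨p, hp, Finset.mem_univ p⟩
  · refine ⟨stabbedPoints n Sg, card_stabbedPoints_le_segCost n hvalid, ?_⟩
    rintro S ⟨s, hs, hstab⟩
    rcases hstab.exists_stabsRect_sqRect_or_le_len with ⟨p, hpS, hp⟩ | hlen
    · exact ⟨p, hpS, mem_stabbedPoints.2 ⟨s, hs, hp⟩⟩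
    · exact absurd ⟨s, hs, hlen⟩ hlong

theorem hittingSet_iff_stabbing_general (n : ℕ) (F : Finset (Finset (Fin n))) (γ : ℝ) :
    (∃ H : Finset (Fin n), (H.card : ℝ) ≤ γ ∧ ∀ S ∈ F, ∃ p ∈ S, p ∈ H) ↔
    (∃ Sg : Finset Seg, (∀ s ∈ Sg, s.valid) ∧
        (∀ S ∈ F, ∃ s ∈ Sg, stabsKS n S s) ∧ segCost Sg ≤ γ) := by
  constructor
  · rintro ⟨H, hcard, hhit⟩
    obtain ⟨Sg, hvalid, hstab, hcost⟩ := exists_stabbingSet_segCost_le_card H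
    exact ⟨Sg, hvalid, fun S hS => hstab S (hhit S hS), hcost.trans hcard⟩
  · rintro ⟨Sg, hvalid, hstab, hcost⟩
    obtain ⟨H, hcard, hhit⟩ := exists_hittingSet_card_le_segCost n hvalid
    exact ⟨H, hcard.trans hcost, fun S hS => hhit S (hstab S hS)⟩

/-- For a finite set `P` of `n` elements, a family `ℱ` of nonempty subsets
of `P`, and every `γ : ℕ`: there is a hitting set `H ⊆ P` with `|H| ≤ γ` iff the family
`{K_S : S ∈ ℱ}` admits a feasible stabbing set of cost at most `γ`. -/
theorem hittingSet_iff_stabbing (n : ℕ) (F : Finset (Finset (Fin n)))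
    (hF : ∀ S ∈ F, S.Nonempty) (γ : ℕ) :
    (∃ H : Finset (Fin n), H.card ≤ γ ∧ ∀ S ∈ F, ∃ p ∈ S, p ∈ H) ↔
    (∃ Sg : Finset Seg, (∀ s ∈ Sg, s.valid) ∧
        (∀ S ∈ F, ∃ s ∈ Sg, stabsKS n S s) ∧ segCost Sg ≤ γ) := by
  simpa only [Nat.cast_le] using hittingSet_iff_stabbing_general n F γ
end

section
/- Let 𝒦 be a finite family of k-shapes, let X be the (finite) set of all x-coordinates x_i^ℓ, x_i^r of the rectangles of the shapes in 𝒦, and let Y be the (finite) set of all y-coordinates y_i^b, y_i^t of these rectangles. Then for every feasible stabbing set S for 𝒦 there exists a feasible stabbing set S′ for 𝒦 whose cost is at most the cost of S and such that every segment [x_1, x_2] × {y} ∈ S′ satisfies x_1 ∈ X, x_2 ∈ X and y ∈ Y. -/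
/-! A segment of a stabbing set may be replaced by any segment that stabs the same rectangles. If
`s` stabs a rectangle, all rectangles stabbed by `s` contain the height of `s` in their `y`-range
and have their `x`-range inside that of `s`. So shrinking `s` horizontally until it just covers
these `x`-ranges, and then lowering it to the topmost of their bottom edges, loses none of them,
does not increase the length, and moves `s` onto the grid. Segments that stab nothing are
discarded. -/

/-- A segment lies on the grid spanned by `ℛ`: its left endpoint is a left coordinate, its right
endpoint a right coordinate, and its height a bottom coordinate, of (possibly three different)
rectangles of `ℛ`. This one-sided form of the paper's `x₁, x₂ ∈ X` and `y ∈ Y` is what shrinking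
and lowering a segment yields. -/
structure Seg.IsAligned (s : Seg) (ℛ : Set Rect) : Prop where
  x1_mem : s.x1 ∈ Rect.xl '' ℛ
  x2_mem : s.x2 ∈ Rect.xr '' ℛ
  y_mem : s.y ∈ Rect.yb '' ℛ

namespace Seg

variable {s : Seg} {ℛ ℛ' : Set Rect}

theorem IsAligned.mono (h : s.IsAligned ℛ) (hsub : ℛ ⊆ ℛ') : s.IsAligned ℛ' where
  x1_mem := Set.image_mono hsub h.x1_mem
  x2_mem := Set.image_mono hsub h.x2_mem
  y_mem := Set.image_mono hsub h.y_mem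

theorem stabsRect.valid {R : Rect} (h : s.stabsRect R) (hR : R.xl ≤ R.xr) : s.valid :=
  h.1.trans (hR.trans h.2.1)

theorem exists_isAligned_of_forall_stabsRect (hfin : ℛ.Finite) (hne : ℛ.Nonempty)
    (hstab : ∀ R ∈ ℛ, s.stabsRect R) :
    ∃ t : Seg, t.IsAligned ℛ ∧ t.len ≤ s.len ∧ ∀ R ∈ ℛ, t.stabsRect R := by
  obtain ⟨L, hL, hleft⟩ := Set.exists_min_image ℛ Rect.xl hfin hne
  obtain ⟨M, hM, hright⟩ := Set.exists_max_image ℛ Rect.xr hfin hne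
  obtain ⟨B, hB, hbottom⟩ := Set.exists_max_image ℛ Rect.yb hfin hne
  obtain ⟨hsL, -, -, -⟩ := hstab L hL
  obtain ⟨-, hMs, -, -⟩ := hstab M hM
  obtain ⟨-, -, hBs, -⟩ := hstab B hB
  refine ⟨⟨L.xl, M.xr, B.yb⟩, ⟨⟨L, hL, rfl⟩, ⟨M, hM, rfl⟩, ⟨B, hB, rfl⟩⟩, sub_le_sub hMs hsL,
    fun R hR => ⟨hleft R hR, hright R hR, hbottom R hR, ?_⟩⟩
  obtain ⟨-, -, -, hsR⟩ := hstab R hR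
  exact hBs.trans hsR

theorem exists_isAligned_of_exists_stabsRect (hfin : ℛ.Finite) (hex : ∃ R ∈ ℛ, s.stabsRect R) :
    ∃ t : Seg, t.IsAligned ℛ ∧ t.len ≤ s.len ∧ ∀ R ∈ ℛ, s.stabsRect R → t.stabsRect R := by
  have hsub : {R ∈ ℛ | s.stabsRect R} ⊆ ℛ := Set.sep_subset _ _
  obtain ⟨t, haligned, hlen, hstab⟩ :=
    exists_isAligned_of_forall_stabsRect (hfin.subset hsub) hex fun _ hR => hR.2
  exact ⟨t, haligned.mono hsub, hlen, fun R hR hs => hstab R ⟨hR, hs⟩⟩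

end Seg

theorem segCost_mono {S T : Finset Seg} (hsub : S ⊆ T) (hT : ∀ s ∈ T, s.valid) :
    segCost S ≤ segCost T :=
  Finset.sum_le_sum_of_subset_of_nonneg hsub fun s hs _ => sub_nonneg.2 (hT s hs)

theorem segCost_image_le [DecidableEq Seg] {S : Finset Seg} {f : Seg → Seg}
    (hvalid : ∀ s ∈ S, (f s).valid) (hlen : ∀ s ∈ S, (f s).len ≤ s.len) :
    segCost (S.image f) ≤ segCost S :=
  calc segCost (S.image f)
      ≤ ∑ s ∈ S, (f s).len := Finset.sum_image_le_of_nonneg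
        (Finset.forall_mem_image.2 fun s hs => sub_nonneg.2 (hvalid s hs))
    _ ≤ segCost S := Finset.sum_le_sum hlen

theorem exists_isAligned_stabbing {ℛ : Set Rect} (hfin : ℛ.Finite)
    (hwidth : ∀ R ∈ ℛ, R.xl ≤ R.xr) {S : Finset Seg} (hS : ∀ s ∈ S, s.valid) :
    ∃ S' : Finset Seg, (∀ s ∈ S', s.valid) ∧
      (∀ R ∈ ℛ, (∃ s ∈ S, s.stabsRect R) → ∃ s ∈ S', s.stabsRect R) ∧
      segCost S' ≤ segCost S ∧
      ∀ s ∈ S', s.IsAligned ℛ := by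
  classical
  choose! f haligned hlen hstab using
    fun s : Seg => s.exists_isAligned_of_exists_stabsRect hfin
  let useful : Finset Seg := {s ∈ S | ∃ R ∈ ℛ, s.stabsRect R}
  have huseful : ∀ s ∈ useful, ∃ R ∈ ℛ, s.stabsRect R := fun s hs => (Finset.mem_filter.1 hs).2
  have hvalid : ∀ s ∈ useful, (f s).valid := by
    intro s hs
    obtain ⟨R, hR, hsR⟩ := huseful s hs
    exact (hstab s ⟨R, hR, hsR⟩ R hR hsR).valid (hwidth R hR)
  refine ⟨useful.image f, Finset.forall_mem_image.2 hvalid, ?_, ?_,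
    Finset.forall_mem_image.2 fun s hs => haligned s (huseful s hs)⟩
  · rintro R hR ⟨s, hs, hsR⟩
    exact ⟨f s, Finset.mem_image_of_mem f (Finset.mem_filter.2 ⟨hs, R, hR, hsR⟩),
      hstab s ⟨R, hR, hsR⟩ R hR hsR⟩
  · exact (segCost_image_le hvalid fun s hs => hlen s (huseful s hs)).trans
      (segCost_mono (Finset.filter_subset _ S) hS)

theorem exists_discretized_solution_general {ι : Type*} {κ : ι → Type*} [∀ a, Finite (κ a)]
    (A : Finset ι) (K : (a : ι) → κ a → Rect) (hK : ∀ a ∈ A, ∀ i, (K a i).xl ≤ (K a i).xr)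
    (S : Finset Seg) (hSvalid : ∀ s ∈ S, s.valid)
    (hSfeas : ∀ a ∈ A, ∃ s ∈ S, ∃ i, s.stabsRect (K a i)) :
    ∃ S' : Finset Seg, (∀ s ∈ S', s.valid) ∧
      (∀ a ∈ A, ∃ s ∈ S', ∃ i, s.stabsRect (K a i)) ∧
      segCost S' ≤ segCost S ∧
      ∀ s ∈ S', s.IsAligned {R | ∃ a ∈ A, ∃ i, K a i = R} := by
  have hfin : {R | ∃ a ∈ A, ∃ i, K a i = R}.Finite := by
    refine (A.finite_toSet.biUnion fun a _ => Set.finite_range (K a)).subset ?_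
    rintro _ ⟨a, ha, i, rfl⟩
    exact Set.mem_biUnion ha ⟨i, rfl⟩
  have hwidth : ∀ R ∈ {R | ∃ a ∈ A, ∃ i, K a i = R}, R.xl ≤ R.xr := by
    rintro _ ⟨a, ha, i, rfl⟩
    exact hK a ha i
  obtain ⟨S', hvalid, hstab, hcost, haligned⟩ := exists_isAligned_stabbing hfin hwidth hSvalid
  refine ⟨S', hvalid, fun a ha => ?_, hcost, haligned⟩
  obtain ⟨s, hs, i, hsi⟩ := hSfeas a ha
  obtain ⟨t, ht, hti⟩ := hstab (K a i) ⟨a, ha, i, rfl⟩ ⟨s, hs, hsi⟩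
  exact ⟨t, ht, i, hti⟩

/-- Let `𝒦` be a finite family of k-shapes (indexed by a finset `A`), let
`X` be the set of all `x`-coordinates and `Y` the set of all `y`-coordinates of the
rectangles of the shapes in `𝒦`. Then every feasible stabbing set `S` for `𝒦` can be
replaced by a feasible stabbing set `S'` of at most the same cost all of whose segments
`[x_1,x_2] × {y}` satisfy `x_1 ∈ X`, `x_2 ∈ X` and `y ∈ Y`. -/
theorem exists_discretized_solution {ι : Type} (A : Finset ι)
    (k : ι → ℕ) (K : (a : ι) → Fin (k a) → Rect)
    (hK : ∀ a ∈ A, IsKShape (K a))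
    (X Y : Set ℝ)
    (hX : X = {x : ℝ | ∃ a ∈ A, ∃ i : Fin (k a), x = (K a i).xl ∨ x = (K a i).xr})
    (hY : Y = {y : ℝ | ∃ a ∈ A, ∃ i : Fin (k a), y = (K a i).yb ∨ y = (K a i).yt})
    (S : Finset Seg) (hSvalid : ∀ s ∈ S, s.valid)
    (hSfeas : ∀ a ∈ A, ∃ s ∈ S, s.stabsShape (K a)) :
    ∃ S' : Finset Seg, (∀ s ∈ S', s.valid) ∧
      (∀ a ∈ A, ∃ s ∈ S', s.stabsShape (K a)) ∧
      segCost S' ≤ segCost S ∧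
      ∀ s ∈ S', s.x1 ∈ X ∧ s.x2 ∈ X ∧ s.y ∈ Y := by
  subst hX hY
  obtain ⟨S', hvalid, hfeas, hcost, haligned⟩ := exists_discretized_solution_general A K
    (fun a ha i => ((hK a ha).1 i).1) S hSvalid hSfeas
  refine ⟨S', hvalid, hfeas, hcost, fun s hs => ?_⟩
  obtain ⟨⟨_, ⟨a, ha, i, rfl⟩, hx1⟩, ⟨_, ⟨b, hb, j, rfl⟩, hx2⟩, ⟨_, ⟨c, hc, l, rfl⟩, hy⟩⟩ :=
    haligned s hs
  exact ⟨⟨a, ha, i, .inl hx1.symm⟩, ⟨b, hb, j, .inr hx2.symm⟩, ⟨c, hc, l, .inl hy.symm⟩⟩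
end
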